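/- Let μ be a Borel probability measure on Ω absolutely continuous with respect to d-dimensional Lebesgue measure, let ν be a Borel probability measure on Ω with μ(spt(ν)) = 0, let u0 be a Kantorovich potential and T0 an optimal transport map for W1(μ,ν), and let A = {y ∈ spt(ν) : α(y) > 0 and β(y) > 0}. If ν(A) = 0, then for μ-almost every x ∈ Ω one has α(x) = |x − T0(x)|. -/

import Mathlib

open MeasureTheory Set

noncomputable section

/-- The Wasserstein 1 distance between two Borel probability measures, defined as the
infimum of the transport cost over all couplings. -/
def W1 {d : ℕ} (μ ν : Measure (EuclideanSpace ℝ (Fin d))) : ℝ :=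
  sInf {c | ∃ γ : Measure (EuclideanSpace ℝ (Fin d) × EuclideanSpace ℝ (Fin d)),
    IsProbabilityMeasure γ ∧ γ.map Prod.fst = μ ∧ γ.map Prod.snd = ν ∧
    c = ∫ p, ‖p.1 - p.2‖ ∂γ}

/-- `u0` is a Kantorovich potential for `W1(μ, ν)`: it is 1-Lipschitz on Ω and achieves
the supremum in the dual problem. -/
def IsKantorovichPotential {d : ℕ} (Ω : Set (EuclideanSpace ℝ (Fin d)))
    (μ ν : Measure (EuclideanSpace ℝ (Fin d))) (u0 : EuclideanSpace ℝ (Fin d) → ℝ) : Prop :=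
  LipschitzOnWith 1 u0 Ω ∧
  ∀ u : EuclideanSpace ℝ (Fin d) → ℝ, LipschitzOnWith 1 u Ω →
    ∫ x, u x ∂μ - ∫ x, u x ∂ν ≤ ∫ x, u0 x ∂μ - ∫ x, u0 x ∂ν

/-- `T` is an optimal transport map for `W1(μ, ν)`: a Borel map from Ω to Ω pushing μ
forward to ν whose transport cost equals `W1 μ ν`. -/
def IsOptimalMap {d : ℕ} (Ω : Set (EuclideanSpace ℝ (Fin d)))
    (μ ν : Measure (EuclideanSpace ℝ (Fin d)))
    (T : EuclideanSpace ℝ (Fin d) → EuclideanSpace ℝ (Fin d)) : Prop :=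
  Measurable T ∧ MapsTo T Ω Ω ∧ μ.map T = ν ∧ ∫ x, ‖x - T x‖ ∂μ = W1 μ ν

/-- `rayLow Ω u0 x` (denoted α in the paper): the distance from `x` to the lower
endpoint of a transport ray through `x`. -/
def rayLow {d : ℕ} (Ω : Set (EuclideanSpace ℝ (Fin d)))
    (u0 : EuclideanSpace ℝ (Fin d) → ℝ) (x : EuclideanSpace ℝ (Fin d)) : ℝ :=
  sSup {r | ∃ z ∈ Ω, u0 x - u0 z = ‖x - z‖ ∧ r = ‖x - z‖}

/-- `rayHigh Ω u0 x` (denoted β in the paper): the distance from `x` to the upper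
endpoint of a transport ray through `x`. -/
def rayHigh {d : ℕ} (Ω : Set (EuclideanSpace ℝ (Fin d)))
    (u0 : EuclideanSpace ℝ (Fin d) → ℝ) (x : EuclideanSpace ℝ (Fin d)) : ℝ :=
  sSup {r | ∃ z ∈ Ω, u0 z - u0 x = ‖x - z‖ ∧ r = ‖x - z‖}

/-- The support of a Borel measure: the set of points all of whose open neighbourhoods
have positive measure (equivalently, the smallest closed set of full measure). -/
def mSupport {X : Type*} [TopologicalSpace X] [MeasurableSpace X] (μ : Measure X) : Set X :=
  {x | ∀ U : Set X, IsOpen U → x ∈ U → 0 < μ U}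

/-!
By Kantorovich–Rubinstein duality `u0` and `T0` have the same value, so
`u0 x - u0 (T0 x) = ‖x - T0 x‖` for `μ`-almost every `x`: the map moves mass down transport rays.
By Rademacher's theorem `u0` is differentiable at almost every `x`, and at such a point the gradient
of `u0` fixes the direction of descent, so a single ray leaves `x` downwards. If this ray went
strictly beyond `T0 x`, then `T0 x ≠ x` would be an interior point of it, which `ν A = 0` excludes.

The duality is a Hahn–Banach argument. The functional `f ↦ inf {∫ φ ∂μ + ∫ ψ ∂ν : f ≤ φ ⊕ ψ}` is
sublinear, and a linear functional below it is positive and has the right marginals, hence is a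
coupling by the Riesz–Markov–Kakutani theorem; it can be chosen to touch the sublinear functional at
minus the cost.
-/

open Bornology CompactlySupported

theorem exists_linearMap_eq_le_of_sublinear {E : Type*} [AddCommGroup E] [Module ℝ E] {N : E → ℝ}
    (hsmul : ∀ c : ℝ, 0 < c → ∀ x, N (c • x) = c * N x) (hadd : ∀ x y, N (x + y) ≤ N x + N y)
    (v : E) : ∃ g : E →ₗ[ℝ] ℝ, g v = N v ∧ ∀ x, g x ≤ N x := by
  have hzero : N 0 = 0 := by
    have htwo := hsmul 2 two_pos 0
    rw [smul_zero] at htwo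
    linarith
  have hneg (x : E) : -N x ≤ N (-x) := by
    linarith [add_neg_cancel x ▸ hadd x (-x)]
  let onSpan : E →ₗ.[ℝ] ℝ := LinearPMap.mkSpanSingleton' v (N v) fun c hc ↦ by
    rcases smul_eq_zero.1 hc with rfl | rfl <;> simp [hzero]
  have hspan (x : onSpan.domain) : onSpan x ≤ N x := by
    obtain ⟨x, hx⟩ := x
    obtain ⟨c, rfl⟩ := Submodule.mem_span_singleton.1 hx
    rw [LinearPMap.mkSpanSingleton'_apply, RingHom.id_apply, smul_eq_mul]
    rcases lt_trichotomy c 0 with hc | rfl | hc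
    · calc c * N v = -N (-c • v) := by rw [hsmul (-c) (neg_pos.2 hc)]; ring
        _ ≤ N (c • v) := by simpa using hneg (-c • v)
    · simp [hzero]
    · exact (hsmul c hc v).ge
  obtain ⟨g, hg, hgN⟩ := exists_extension_of_le_sublinear onSpan N hsmul hadd hspan
  refine ⟨g, ?_, hgN⟩
  have hv : v ∈ onSpan.domain := Submodule.mem_span_singleton_self v
  exact (hg ⟨v, hv⟩).trans (LinearPMap.mkSpanSingleton'_apply_self v (N v) _ hv)

section Coupling

/-- `γ` is a coupling (transport plan) of `μ` and `ν`: its marginals are `μ` and `ν`. -/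
structure IsCoupling {X Y : Type*} [MeasurableSpace X] [MeasurableSpace Y]
    (μ : Measure X) (ν : Measure Y) (γ : Measure (X × Y)) : Prop where
  map_fst : γ.map Prod.fst = μ
  map_snd : γ.map Prod.snd = ν

variable {X Y X' Y' : Type*} [MeasurableSpace X] [MeasurableSpace Y] [MeasurableSpace X']
  [MeasurableSpace Y'] {μ : Measure X} {ν : Measure Y} {γ : Measure (X × Y)}

theorem IsCoupling.isProbabilityMeasure [IsProbabilityMeasure μ] (hγ : IsCoupling μ ν γ) :
    IsProbabilityMeasure γ := by
  rwa [← Measure.isProbabilityMeasure_map_iff measurable_fst.aemeasurable, hγ.map_fst]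

theorem IsCoupling.map (hγ : IsCoupling μ ν γ) {f : X → X'} {g : Y → Y'} (hf : Measurable f)
    (hg : Measurable g) : IsCoupling (μ.map f) (ν.map g) (γ.map (Prod.map f g)) where
  map_fst := by
    rw [← hγ.map_fst, Measure.map_map measurable_fst (hf.prodMap hg),
      Measure.map_map hf measurable_fst, Prod.map_fst']
  map_snd := by
    rw [← hγ.map_snd, Measure.map_map measurable_snd (hf.prodMap hg),
      Measure.map_map hg measurable_snd, Prod.map_snd']

end Coupling

section Kantorovich

theorem integrable_continuousMap {X : Type*} [TopologicalSpace X] [CompactSpace X]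
    [MeasurableSpace X] [OpensMeasurableSpace X] (μ : Measure X) [IsFiniteMeasure μ] (φ : C(X, ℝ)) :
    Integrable φ μ :=
  (BoundedContinuousFunction.mkOfCompact φ).integrable μ

theorem exists_isFiniteMeasure_integral_eq_of_nonneg {X : Type*} [TopologicalSpace X]
    [CompactSpace X] [T2Space X] [MeasurableSpace X] [BorelSpace X] (g : C(X, ℝ) →ₗ[ℝ] ℝ)
    (hg : ∀ f, 0 ≤ f → 0 ≤ g f) :
    ∃ γ : Measure X, IsFiniteMeasure γ ∧ ∀ f : C(X, ℝ), ∫ x, f x ∂γ = g f := by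
  let toC : C_c(X, ℝ) →ₗ[ℝ] C(X, ℝ) :=
    { toFun := fun f ↦ f.toContinuousMap
      map_add' := fun _ _ ↦ rfl
      map_smul' := fun _ _ ↦ rfl }
  let Λ : C_c(X, ℝ) →ₚ[ℝ] ℝ := PositiveLinearMap.mk₀ (g ∘ₗ toC) fun f hf ↦ hg _ hf
  exact ⟨RealRMK.rieszMeasure Λ, inferInstance, fun f ↦
    RealRMK.integral_rieszMeasure Λ (CompactlySupportedContinuousMap.continuousMapEquiv f)⟩

variable {X Y : Type*} [TopologicalSpace X] [MeasurableSpace X] [TopologicalSpace Y]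
  [MeasurableSpace Y]

/-- The pairs `(φ, ψ)` of continuous functions with `f ≤ φ ⊕ ψ`. -/
def dominatingPairs (f : C(X × Y, ℝ)) : Set (C(X, ℝ) × C(Y, ℝ)) :=
  {p | ∀ x y, f (x, y) ≤ p.1 x + p.2 y}

/-- The value of the dual Kantorovich problem for the reward `f` (that is, for the cost `-f`): the
infimum of `∫ φ ∂μ + ∫ ψ ∂ν` over the continuous `φ`, `ψ` with `f ≤ φ ⊕ ψ`. -/
def dualValue (μ : Measure X) (ν : Measure Y) (f : C(X × Y, ℝ)) : ℝ :=
  sInf ((fun p : C(X, ℝ) × C(Y, ℝ) ↦ ∫ x, p.1 x ∂μ + ∫ y, p.2 y ∂ν) '' dominatingPairs f)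

variable {μ : Measure X} {ν : Measure Y} {f : C(X × Y, ℝ)} {φ : C(X, ℝ)} {ψ : C(Y, ℝ)} {b : ℝ}

theorem le_dualValue [CompactSpace X] [CompactSpace Y]
    (h : ∀ φ ψ, (φ, ψ) ∈ dominatingPairs f → b ≤ ∫ x, φ x ∂μ + ∫ y, ψ y ∂ν) :
    b ≤ dualValue μ ν f := by
  refine le_csInf (Nonempty.image _ ⟨(.const X ‖f‖, 0), fun x y ↦ ?_⟩) ?_
  · simpa using f.apply_le_norm (x, y)
  · rintro _ ⟨⟨φ, ψ⟩, hp, rfl⟩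
    exact h φ ψ hp

variable [CompactSpace X] [BorelSpace X] [CompactSpace Y] [BorelSpace Y] [IsProbabilityMeasure μ]
  [IsProbabilityMeasure ν]

theorem le_integral_add_integral (h : ∀ x y, b ≤ φ x + ψ y) :
    b ≤ ∫ x, φ x ∂μ + ∫ y, ψ y ∂ν := by
  obtain ⟨x, hx⟩ := exists_le_integral (integrable_continuousMap μ φ)
  obtain ⟨y, hy⟩ := exists_le_integral (integrable_continuousMap ν ψ)
  exact (h x y).trans (add_le_add hx hy)

theorem dualValue_le (h : (φ, ψ) ∈ dominatingPairs f) :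
    dualValue μ ν f ≤ ∫ x, φ x ∂μ + ∫ y, ψ y ∂ν := by
  refine csInf_le ⟨-‖f‖, ?_⟩ (mem_image_of_mem _ h)
  rintro _ ⟨⟨φ', ψ'⟩, hp, rfl⟩
  exact le_integral_add_integral fun x y ↦ (f.neg_norm_le_apply (x, y)).trans (hp x y)

theorem dualValue_smul_le {c : ℝ} (hc : 0 < c) (f : C(X × Y, ℝ)) :
    dualValue μ ν (c • f) ≤ c * dualValue μ ν f := by
  rw [← inv_mul_le_iff₀ hc]
  refine le_dualValue fun φ ψ h ↦ ?_
  rw [inv_mul_le_iff₀ hc, mul_add, ← integral_const_mul, ← integral_const_mul]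
  refine dualValue_le (φ := c • φ) (ψ := c • ψ) fun x y ↦ ?_
  simpa [mul_add] using mul_le_mul_of_nonneg_left (h x y) hc.le

theorem dualValue_smul {c : ℝ} (hc : 0 < c) (f : C(X × Y, ℝ)) :
    dualValue μ ν (c • f) = c * dualValue μ ν f := by
  refine (dualValue_smul_le hc f).antisymm ?_
  rw [← le_inv_mul_iff₀ hc]
  simpa [smul_smul, hc.ne'] using dualValue_smul_le (μ := μ) (ν := ν) (inv_pos.2 hc) (c • f)

theorem dualValue_add_le (f g : C(X × Y, ℝ)) :
    dualValue μ ν (f + g) ≤ dualValue μ ν f + dualValue μ ν g := by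
  rw [← sub_le_iff_le_add]
  refine le_dualValue fun φ ψ hf ↦ ?_
  rw [sub_le_comm]
  refine le_dualValue fun φ' ψ' hg ↦ ?_
  have hsum : dualValue μ ν (f + g) ≤ ∫ x, (φ + φ') x ∂μ + ∫ y, (ψ + ψ') y ∂ν :=
    dualValue_le fun x y ↦ by
      simpa [add_add_add_comm] using add_le_add (hf x y) (hg x y)
  simp only [ContinuousMap.add_apply] at hsum
  rw [integral_add (integrable_continuousMap μ φ) (integrable_continuousMap μ φ'),
    integral_add (integrable_continuousMap ν ψ) (integrable_continuousMap ν ψ')] at hsum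
  linarith

variable [T2Space X] [SecondCountableTopology X] [T2Space Y] [SecondCountableTopology Y]

theorem isCoupling_of_integral_le_dualValue {γ : Measure (X × Y)} [IsFiniteMeasure γ]
    (h : ∀ f : C(X × Y, ℝ), ∫ p, f p ∂γ ≤ dualValue μ ν f) : IsCoupling μ ν γ := by
  have hfst (φ : C(X, ℝ)) : ∫ p, φ p.1 ∂γ ≤ ∫ x, φ x ∂μ := by
    simpa using (h (φ.comp .fst)).trans
      (dualValue_le (φ := φ) (ψ := 0) fun x y ↦ by simp)
  have hsnd (ψ : C(Y, ℝ)) : ∫ p, ψ p.2 ∂γ ≤ ∫ y, ψ y ∂ν := by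
    simpa using (h (ψ.comp .snd)).trans
      (dualValue_le (φ := 0) (ψ := ψ) fun x y ↦ by simp)
  constructor
  · refine ext_of_forall_integral_eq_of_IsFiniteMeasure fun φ ↦ ?_
    rw [integral_map (by fun_prop) (by fun_prop)]
    refine (hfst φ).antisymm ?_
    simpa [integral_neg] using hfst (-φ)
  · refine ext_of_forall_integral_eq_of_IsFiniteMeasure fun ψ ↦ ?_
    rw [integral_map (by fun_prop) (by fun_prop)]
    refine (hsnd ψ).antisymm ?_
    simpa [integral_neg] using hsnd (-ψ)

variable (μ ν) in
theorem exists_isCoupling_integral_eq_dualValue (f : C(X × Y, ℝ)) :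
    ∃ γ, IsCoupling μ ν γ ∧ ∫ p, f p ∂γ = dualValue μ ν f := by
  obtain ⟨g, hgf, hg⟩ := exists_linearMap_eq_le_of_sublinear (N := dualValue μ ν)
    (fun c hc ↦ dualValue_smul hc) dualValue_add_le f
  have hpos (k : C(X × Y, ℝ)) (hk : 0 ≤ k) : 0 ≤ g k := by
    have hneg : g (-k) ≤ 0 := by
      simpa using (hg (-k)).trans
        (dualValue_le (φ := 0) (ψ := 0) fun x y ↦ by simpa using hk (x, y))
    simpa using hneg
  obtain ⟨γ, hγ, hγg⟩ := exists_isFiniteMeasure_integral_eq_of_nonneg g hpos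
  exact ⟨γ, isCoupling_of_integral_le_dualValue fun k ↦ (hγg k).trans_le (hg k),
    (hγg f).trans hgf⟩

theorem exists_isCoupling_integral_le {c : C(X × Y, ℝ)} {B : ℝ}
    (hB : ∀ (φ : C(X, ℝ)) (ψ : C(Y, ℝ)), (∀ x y, φ x + ψ y ≤ c (x, y)) →
      ∫ x, φ x ∂μ + ∫ y, ψ y ∂ν ≤ B) :
    ∃ γ, IsCoupling μ ν γ ∧ ∫ p, c p ∂γ ≤ B := by
  obtain ⟨γ, hγ, hγc⟩ := exists_isCoupling_integral_eq_dualValue μ ν (-c)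
  refine ⟨γ, hγ, ?_⟩
  have hdual : -B ≤ dualValue μ ν (-c) := le_dualValue fun φ ψ h ↦ by
    have hle := hB (-φ) (-ψ) fun x y ↦ by
      have hxy : -c (x, y) ≤ φ x + ψ y := h x y
      simp only [ContinuousMap.neg_apply]
      linarith
    simp only [ContinuousMap.neg_apply, integral_neg] at hle
    linarith
  simp only [ContinuousMap.neg_apply, integral_neg] at hγc
  linarith

end Kantorovich

section KantorovichRubinstein

theorem exists_lipschitzWith_one_between {X : Type*} [PseudoMetricSpace X] {f g : X → ℝ}
    (h : ∀ x y, f x ≤ g y + dist x y) : ∃ u, LipschitzWith 1 u ∧ f ≤ u ∧ u ≤ g := by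
  rcases isEmpty_or_nonempty X with hX | hX
  · exact ⟨f, fun x ↦ hX.elim x, le_rfl, fun x ↦ hX.elim x⟩
  have hbdd (x : X) : BddBelow (range fun y ↦ g y + dist x y) :=
    ⟨f x, by rintro _ ⟨y, rfl⟩; exact h x y⟩
  refine ⟨fun x ↦ ⨅ y, g y + dist x y, LipschitzWith.of_le_add fun x y ↦ ?_,
    fun x ↦ le_ciInf (h x), fun x ↦ by simpa using ciInf_le (hbdd x) x⟩
  rw [← sub_le_iff_le_add]
  refine le_ciInf fun z ↦ ?_
  linarith [ciInf_le (hbdd x) z, dist_triangle x y z]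

theorem exists_isCoupling_integral_dist_le {X : Type*} [MetricSpace X] [CompactSpace X]
    [MeasurableSpace X] [BorelSpace X] {μ ν : Measure X} [IsProbabilityMeasure μ]
    [IsProbabilityMeasure ν] {B : ℝ}
    (hB : ∀ u : X → ℝ, LipschitzWith 1 u → ∫ x, u x ∂μ - ∫ x, u x ∂ν ≤ B) :
    ∃ γ, IsCoupling μ ν γ ∧ ∫ p, dist p.1 p.2 ∂γ ≤ B := by
  refine exists_isCoupling_integral_le (c := ⟨fun p ↦ dist p.1 p.2, continuous_dist⟩)
    fun φ ψ h ↦ ?_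
  obtain ⟨u, hu, hφu, huψ⟩ := exists_lipschitzWith_one_between (f := φ) (g := -ψ) fun x y ↦ by
    have hxy : φ x + ψ y ≤ dist x y := h x y
    simp only [Pi.neg_apply]
    linarith
  have hint (ρ : Measure X) [IsFiniteMeasure ρ] : Integrable u ρ :=
    integrable_continuousMap ρ ⟨u, hu.continuous⟩
  calc ∫ x, φ x ∂μ + ∫ y, ψ y ∂ν = ∫ x, φ x ∂μ - ∫ y, -ψ y ∂ν := by rw [integral_neg]; ring
    _ ≤ ∫ x, u x ∂μ - ∫ y, u y ∂ν :=
      sub_le_sub (integral_mono (integrable_continuousMap μ φ) (hint μ) hφu)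
        (integral_mono (hint ν) (integrable_continuousMap ν ψ).neg huψ)
    _ ≤ B := hB u hu

theorem exists_isProbabilityMeasure_map_subtype_val_eq {X : Type*} [MeasurableSpace X] {K : Set X}
    (hK : MeasurableSet K) {μ : Measure X} [IsProbabilityMeasure μ] (hμK : μ Kᶜ = 0) :
    ∃ ρ : Measure K, IsProbabilityMeasure ρ ∧ ρ.map Subtype.val = μ := by
  have hmap : (μ.comap (Subtype.val : K → X)).map Subtype.val = μ := by
    rw [map_comap_subtype_coe hK]
    exact Measure.restrict_eq_self_of_ae_mem hμK
  refine ⟨_, ?_, hmap⟩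
  rwa [← Measure.isProbabilityMeasure_map_iff measurable_subtype_coe.aemeasurable, hmap]

theorem exists_isCoupling_integral_dist_le_of_isCompact {X : Type*} [MetricSpace X]
    [MeasurableSpace X] [BorelSpace X] {K : Set X} (hK : IsCompact K) {μ ν : Measure X}
    [IsProbabilityMeasure μ] [IsProbabilityMeasure ν] (hμK : μ Kᶜ = 0) (hνK : ν Kᶜ = 0) {B : ℝ}
    (hB : ∀ u : X → ℝ, LipschitzOnWith 1 u K → ∫ x, u x ∂μ - ∫ x, u x ∂ν ≤ B) :
    ∃ γ, IsCoupling μ ν γ ∧ ∫ p, dist p.1 p.2 ∂γ ≤ B := by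
  have hKm : MeasurableSet K := hK.measurableSet
  have hval : MeasurableEmbedding (Subtype.val : K → X) := .subtype_coe hKm
  have : CompactSpace K := isCompact_iff_compactSpace.1 hK
  obtain ⟨μ', hμ', rfl⟩ := exists_isProbabilityMeasure_map_subtype_val_eq hKm hμK
  obtain ⟨ν', hν', rfl⟩ := exists_isProbabilityMeasure_map_subtype_val_eq hKm hνK
  obtain ⟨γ, hγ, hγB⟩ := exists_isCoupling_integral_dist_le (μ := μ') (ν := ν') (B := B)
    fun v hv ↦ by
      have hext : K.domRestrict (Function.extend Subtype.val v 0) = v :=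
        Function.extend_comp Subtype.val_injective v 0
      have hle := hB (Function.extend Subtype.val v 0)
        (lipschitzOnWith_iff_restrict.2 (by rwa [hext]))
      simpa only [hval.integral_map, Subtype.val_injective.extend_apply] using hle
  refine ⟨_, hγ.map hval.measurable hval.measurable, ?_⟩
  rw [(hval.prodMap hval).integral_map]
  exact hγB

end KantorovichRubinstein

section TransportRay

theorem sub_le_dist_of_lipschitzWith_one {X : Type*} [PseudoMetricSpace X] {u : X → ℝ}
    (hu : LipschitzWith 1 u) (x y : X) : u x - u y ≤ dist x y := by
  simpa [add_comm] using hu.le_add_mul x y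

variable {E : Type*} [NormedAddCommGroup E] [NormedSpace ℝ E] {u : E → ℝ} {x y z : E}

theorem sub_lineMap_eq_mul_norm_sub (hu : LipschitzWith 1 u) (h : u x - u y = ‖x - y‖) {t : ℝ}
    (ht : t ∈ Icc (0 : ℝ) 1) : u x - u (AffineMap.lineMap x y t) = t * ‖x - y‖ := by
  have hleft : u x - u (AffineMap.lineMap x y t) ≤ t * ‖x - y‖ := by
    refine (sub_le_dist_of_lipschitzWith_one hu x (AffineMap.lineMap x y t)).trans_eq ?_
    rw [dist_left_lineMap, Real.norm_of_nonneg ht.1, dist_eq_norm]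
  have hright : u (AffineMap.lineMap x y t) - u y ≤ (1 - t) * ‖x - y‖ := by
    refine (sub_le_dist_of_lipschitzWith_one hu (AffineMap.lineMap x y t) y).trans_eq ?_
    rw [dist_lineMap_right, Real.norm_of_nonneg (sub_nonneg.2 ht.2), dist_eq_norm]
  linarith

theorem fderiv_apply_sub_eq_neg_norm (hu : LipschitzWith 1 u) (hd : DifferentiableAt ℝ u x)
    (h : u x - u y = ‖x - y‖) : fderiv ℝ u x (y - x) = -‖y - x‖ := by
  have hchain : HasDerivAt (fun t : ℝ ↦ u (AffineMap.lineMap x y t)) (fderiv ℝ u x (y - x)) 0 :=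
    HasFDerivAt.comp_hasDerivAt (0 : ℝ) (by simpa using hd.hasFDerivAt) AffineMap.hasDerivAt_lineMap
  have haffine : HasDerivWithinAt (fun t : ℝ ↦ u (AffineMap.lineMap x y t)) (-‖y - x‖)
      (Icc 0 1) 0 := by
    have hline : HasDerivAt (fun t : ℝ ↦ u x - t * ‖y - x‖) (-‖y - x‖) 0 := by
      simpa using ((hasDerivAt_id (0 : ℝ)).mul_const ‖y - x‖).const_sub (u x)
    refine hline.hasDerivWithinAt.congr_of_mem (fun t ht ↦ ?_) (by simp)
    rw [norm_sub_rev y x, ← sub_lineMap_eq_mul_norm_sub hu h ht, sub_sub_cancel]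
  exact (uniqueDiffOn_Icc zero_lt_one 0 (by simp)).eq_deriv _ hchain.hasDerivWithinAt haffine

/- The derivative has norm at most one and attains it on both directions, hence on their sum, which
forces equality in the triangle inequality. -/
theorem sameRay_of_differentiableAt [StrictConvexSpace ℝ E] (hu : LipschitzWith 1 u)
    (hd : DifferentiableAt ℝ u x) (hy : u x - u y = ‖x - y‖) (hz : u x - u z = ‖x - z‖) :
    SameRay ℝ (y - x) (z - x) := by
  rw [sameRay_iff_norm_add]
  refine (norm_add_le _ _).antisymm ?_
  have hnorm : ‖fderiv ℝ u x‖ ≤ 1 := by simpa using norm_fderiv_le_of_lipschitz ℝ hu (x₀ := x)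
  calc ‖y - x‖ + ‖z - x‖ = -fderiv ℝ u x ((y - x) + (z - x)) := by
        rw [map_add, fderiv_apply_sub_eq_neg_norm hu hd hy, fderiv_apply_sub_eq_neg_norm hu hd hz]
        ring
    _ ≤ ‖fderiv ℝ u x ((y - x) + (z - x))‖ := neg_le_abs _
    _ ≤ ‖(y - x) + (z - x)‖ := by
        simpa using (fderiv ℝ u x).le_of_opNorm_le hnorm ((y - x) + (z - x))

theorem sub_eq_norm_sub_of_differentiableAt [StrictConvexSpace ℝ E] (hu : LipschitzWith 1 u)
    (hd : DifferentiableAt ℝ u x) (hy : u x - u y = ‖x - y‖) (hz : u x - u z = ‖x - z‖)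
    (hle : ‖x - y‖ ≤ ‖x - z‖) : u y - u z = ‖y - z‖ := by
  have hsub := (sameRay_of_differentiableAt hu hd hy hz).norm_sub
  rw [sub_sub_sub_cancel_right, norm_sub_rev y x, norm_sub_rev z x,
    abs_of_nonpos (sub_nonpos.2 hle)] at hsub
  linarith

end TransportRay

section RayLength

variable {d : ℕ} {Ω : Set (EuclideanSpace ℝ (Fin d))} {u v : EuclideanSpace ℝ (Fin d) → ℝ}
  {x y z : EuclideanSpace ℝ (Fin d)}

theorem bddAbove_norm_sub {E : Type*} [SeminormedAddCommGroup E] {s : Set E} (hs : IsBounded s)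
    (x : E) (p : E → Prop) : BddAbove {r | ∃ z ∈ s, p z ∧ r = ‖x - z‖} := by
  obtain ⟨C, hC⟩ := hs.subset_closedBall x
  refine ⟨C, ?_⟩
  rintro _ ⟨z, hz, -, rfl⟩
  simpa [dist_eq_norm, norm_sub_rev] using hC hz

theorem norm_sub_le_rayLow (hΩ : IsBounded Ω) (hz : z ∈ Ω) (h : u x - u z = ‖x - z‖) :
    ‖x - z‖ ≤ rayLow Ω u x :=
  le_csSup (bddAbove_norm_sub hΩ x _) ⟨z, hz, h, rfl⟩

theorem norm_sub_le_rayHigh (hΩ : IsBounded Ω) (hz : z ∈ Ω) (h : u z - u x = ‖x - z‖) :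
    ‖x - z‖ ≤ rayHigh Ω u x :=
  le_csSup (bddAbove_norm_sub hΩ x _) ⟨z, hz, h, rfl⟩

theorem rayLow_congr (h : EqOn u v Ω) (hx : x ∈ Ω) : rayLow Ω u x = rayLow Ω v x := by
  unfold rayLow
  congr 1
  ext r
  refine exists_congr fun z ↦ and_congr_right fun hz ↦ ?_
  rw [h hx, h hz]

theorem rayHigh_congr (h : EqOn u v Ω) (hx : x ∈ Ω) : rayHigh Ω u x = rayHigh Ω v x := by
  unfold rayHigh
  congr 1
  ext r
  refine exists_congr fun z ↦ and_congr_right fun hz ↦ ?_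
  rw [h hx, h hz]

theorem rayLow_eq_norm_sub (hΩ : IsBounded Ω) (hu : LipschitzWith 1 u)
    (hd : DifferentiableAt ℝ u x) (hx : x ∈ Ω) (hy : y ∈ Ω) (hne : x ≠ y)
    (hxy : u x - u y = ‖x - y‖) (hend : ¬(0 < rayLow Ω u y ∧ 0 < rayHigh Ω u y)) :
    rayLow Ω u x = ‖x - y‖ := by
  refine le_antisymm (csSup_le ⟨_, y, hy, hxy, rfl⟩ ?_) (norm_sub_le_rayLow hΩ hy hxy)
  rintro _ ⟨z, hz, hxz, rfl⟩
  by_contra! hlt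
  have hyz : u y - u z = ‖y - z‖ := sub_eq_norm_sub_of_differentiableAt hu hd hxy hxz hlt.le
  have hlow : 0 < rayLow Ω u y :=
    lt_of_lt_of_le (by linarith) (norm_sub_le_rayLow hΩ hz hyz)
  have hhigh : 0 < rayHigh Ω u y :=
    (norm_sub_pos_iff.2 hne.symm).trans_le
      (norm_sub_le_rayHigh hΩ hx (hxy.trans (norm_sub_rev x y)))
  exact hend ⟨hlow, hhigh⟩

end RayLength

section Optimality

theorem integrable_of_lipschitzWith_of_isBounded {X E : Type*} [PseudoMetricSpace X]
    [MeasurableSpace X] [OpensMeasurableSpace X] [NormedAddCommGroup E]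
    [SecondCountableTopology E] {K : NNReal} {f : X → E} (hf : LipschitzWith K f)
    {s : Set X} (hs : IsBounded s) {μ : Measure X} [IsFiniteMeasure μ] (hμs : μ sᶜ = 0) :
    Integrable f μ := by
  obtain ⟨C, hC⟩ := (hf.isBounded_image hs).exists_norm_le
  exact .of_bound hf.continuous.aestronglyMeasurable C
    (Filter.mem_of_superset hμs fun x hx ↦ hC _ (mem_image_of_mem f hx))

theorem ae_sub_eq_dist_of_integral_dist_le {X : Type*} [PseudoMetricSpace X] [MeasurableSpace X]
    {μ : Measure X} {u : X → ℝ} {T : X → X} (hu : LipschitzWith 1 u) (hint : Integrable u μ)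
    (hintT : Integrable (fun x ↦ u (T x)) μ) (hintd : Integrable (fun x ↦ dist x (T x)) μ)
    (hle : ∫ x, dist x (T x) ∂μ ≤ ∫ x, u x ∂μ - ∫ x, u (T x) ∂μ) :
    ∀ᵐ x ∂μ, u x - u (T x) = dist x (T x) := by
  have hpoint (x : X) : u x - u (T x) ≤ dist x (T x) :=
    sub_le_dist_of_lipschitzWith_one hu x (T x)
  have hsub : Integrable (fun x ↦ u x - u (T x)) μ := hint.sub hintT
  refine (integral_eq_iff_of_ae_le hsub hintd (.of_forall hpoint)).1 ?_
  exact (integral_mono hsub hintd hpoint).antisymm (by rwa [integral_sub hint hintT])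

variable {d : ℕ} {Ω : Set (EuclideanSpace ℝ (Fin d))} {μ ν : Measure (EuclideanSpace ℝ (Fin d))}

theorem IsCoupling.W1_le {γ : Measure (EuclideanSpace ℝ (Fin d) × EuclideanSpace ℝ (Fin d))}
    [IsProbabilityMeasure μ] (hγ : IsCoupling μ ν γ) : W1 μ ν ≤ ∫ p, ‖p.1 - p.2‖ ∂γ := by
  refine csInf_le ⟨0, ?_⟩ ⟨γ, hγ.isProbabilityMeasure, hγ.map_fst, hγ.map_snd, rfl⟩
  rintro _ ⟨γ', -, -, -, rfl⟩
  positivity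

variable {u v : EuclideanSpace ℝ (Fin d) → ℝ}

theorem IsKantorovichPotential.congr (hu : IsKantorovichPotential Ω μ ν u) (hμΩ : μ Ωᶜ = 0)
    (hνΩ : ν Ωᶜ = 0) (huv : EqOn u v Ω) : IsKantorovichPotential Ω μ ν v := by
  have hint {ρ : Measure (EuclideanSpace ℝ (Fin d))} (hρ : ρ Ωᶜ = 0) :
      ∫ x, v x ∂ρ = ∫ x, u x ∂ρ :=
    integral_congr_ae (Filter.mem_of_superset hρ huv.symm)
  refine ⟨fun x hx y hy ↦ huv hx ▸ huv hy ▸ hu.1 hx hy, fun w hw ↦ ?_⟩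
  rw [hint hμΩ, hint hνΩ]
  exact hu.2 w hw

theorem IsKantorovichPotential.W1_le [IsProbabilityMeasure μ] [IsProbabilityMeasure ν]
    (hu : IsKantorovichPotential Ω μ ν u) (hΩ : IsBounded Ω) (hμΩ : μ Ωᶜ = 0)
    (hνΩ : ν Ωᶜ = 0) : W1 μ ν ≤ ∫ x, u x ∂μ - ∫ x, u x ∂ν := by
  have hcompl : (closure Ω)ᶜ ⊆ Ωᶜ := compl_subset_compl.2 subset_closure
  obtain ⟨γ, hγ, hle⟩ := exists_isCoupling_integral_dist_le_of_isCompact hΩ.isCompact_closure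
    (measure_mono_null hcompl hμΩ) (measure_mono_null hcompl hνΩ)
    fun w hw ↦ hu.2 w (hw.mono subset_closure)
  simp only [dist_eq_norm] at hle
  exact hγ.W1_le.trans hle

variable {T : EuclideanSpace ℝ (Fin d) → EuclideanSpace ℝ (Fin d)}

theorem IsOptimalMap.ae_sub_eq_norm_sub [IsProbabilityMeasure μ] [IsProbabilityMeasure ν]
    (hT : IsOptimalMap Ω μ ν T) (hu : IsKantorovichPotential Ω μ ν u) (huL : LipschitzWith 1 u)
    (hΩ : IsBounded Ω) (hμΩ : μ Ωᶜ = 0) (hνΩ : ν Ωᶜ = 0) :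
    ∀ᵐ x ∂μ, u x - u (T x) = ‖x - T x‖ := by
  have hle := hu.W1_le hΩ hμΩ hνΩ
  obtain ⟨hTm, -, rfl, hTcost⟩ := hT
  have hintT : Integrable (fun x ↦ u (T x)) μ :=
    (integrable_of_lipschitzWith_of_isBounded huL hΩ hνΩ).comp_measurable hTm
  have hintd : Integrable (fun x ↦ dist x (T x)) μ := by
    simpa only [dist_eq_norm, Pi.sub_apply, Function.comp_apply, id_eq] using
      ((integrable_of_lipschitzWith_of_isBounded LipschitzWith.id hΩ hμΩ).sub
        ((integrable_of_lipschitzWith_of_isBounded LipschitzWith.id hΩ hνΩ).comp_measurable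
          hTm)).norm
  have hcost : ∫ x, dist x (T x) ∂μ ≤ ∫ x, u x ∂μ - ∫ x, u (T x) ∂μ := by
    rw [integral_map hTm.aemeasurable huL.continuous.aestronglyMeasurable] at hle
    simpa only [dist_eq_norm, hTcost] using hle
  simpa only [dist_eq_norm] using ae_sub_eq_dist_of_integral_dist_le huL
    (integrable_of_lipschitzWith_of_isBounded huL hΩ hμΩ) hintT hintd hcost

theorem IsOptimalMap.ae_of_ae (hT : IsOptimalMap Ω μ ν T)
    {p : EuclideanSpace ℝ (Fin d) → Prop} (hp : ∀ᵐ y ∂ν, p y) : ∀ᵐ x ∂μ, p (T x) :=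
  ae_of_ae_map hT.1.aemeasurable (hT.2.2.1.symm ▸ hp)

theorem ae_mem_mSupport {X : Type*} [TopologicalSpace X] [HereditarilyLindelofSpace X]
    [MeasurableSpace X] (ν : Measure X) : ∀ᵐ y ∂ν, y ∈ mSupport ν :=
  Filter.mem_of_superset Measure.support_mem_ae fun _ hy _ hU hyU ↦
    (Measure.mem_support_iff_forall _).1 hy _ (hU.mem_nhds hyU)

end Optimality

theorem stmt8_general {d : ℕ} {Ω : Set (EuclideanSpace ℝ (Fin d))} (hΩ : IsBounded Ω)
    {μ ν : Measure (EuclideanSpace ℝ (Fin d))}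
    [IsProbabilityMeasure μ] [IsProbabilityMeasure ν]
    (hμΩ : μ Ωᶜ = 0) (hνΩ : ν Ωᶜ = 0) (hac : μ ≪ volume)
    (hμspt : μ (mSupport ν) = 0)
    {u0 : EuclideanSpace ℝ (Fin d) → ℝ} (hu0 : IsKantorovichPotential Ω μ ν u0)
    {T0 : EuclideanSpace ℝ (Fin d) → EuclideanSpace ℝ (Fin d)}
    (hT0 : IsOptimalMap Ω μ ν T0)
    (hA : ν {y | y ∈ mSupport ν ∧ 0 < rayLow Ω u0 y ∧ 0 < rayHigh Ω u0 y} = 0) :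
    ∀ᵐ x ∂μ, rayLow Ω u0 x = ‖x - T0 x‖ := by
  obtain ⟨u, huL, hu0u⟩ := hu0.1.extend_real
  have hray : ∀ᵐ x ∂μ, u x - u (T0 x) = ‖x - T0 x‖ :=
    hT0.ae_sub_eq_norm_sub (hu0.congr hμΩ hνΩ hu0u) huL hΩ hμΩ hνΩ
  have hdiff : ∀ᵐ x ∂μ, DifferentiableAt ℝ u x := hac.ae_le huL.ae_differentiableAt
  have hsupp : ∀ᵐ x ∂μ, T0 x ∈ mSupport ν := hT0.ae_of_ae (ae_mem_mSupport ν)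
  have hend := hT0.ae_of_ae (measure_eq_zero_iff_ae_notMem.1 hA)
  filter_upwards [hμΩ, hray, hdiff, hsupp, hend, measure_eq_zero_iff_ae_notMem.1 hμspt]
    with x hx hxray hxdiff hTsupp hTend hxsupp
  have hTx : T0 x ∈ Ω := hT0.2.1 hx
  have hne : x ≠ T0 x := fun h ↦ hxsupp (h ▸ hTsupp)
  rw [rayLow_congr hu0u hx]
  refine rayLow_eq_norm_sub hΩ huL hxdiff hx hTx hne hxray fun hpos ↦ hTend ⟨hTsupp, ?_⟩
  rwa [rayLow_congr hu0u hTx, rayHigh_congr hu0u hTx]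

theorem stmt8 {d : ℕ} (hd : 1 ≤ d) (Ω : Set (EuclideanSpace ℝ (Fin d)))
    (hΩc : IsCompact Ω) (hΩv : Convex ℝ Ω)
    (μ ν : Measure (EuclideanSpace ℝ (Fin d)))
    [IsProbabilityMeasure μ] [IsProbabilityMeasure ν]
    (hμΩ : μ Ωᶜ = 0) (hνΩ : ν Ωᶜ = 0) (hac : μ ≪ volume)
    (hμspt : μ (mSupport ν) = 0)
    (u0 : EuclideanSpace ℝ (Fin d) → ℝ) (hu0 : IsKantorovichPotential Ω μ ν u0)
    (T0 : EuclideanSpace ℝ (Fin d) → EuclideanSpace ℝ (Fin d))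
    (hT0 : IsOptimalMap Ω μ ν T0)
    (hA : ν {y | y ∈ mSupport ν ∧ 0 < rayLow Ω u0 y ∧ 0 < rayHigh Ω u0 y} = 0) :
    ∀ᵐ x ∂μ, rayLow Ω u0 x = ‖x - T0 x‖ := by
  exact stmt8_general hΩc.isBounded hμΩ hνΩ hac hμspt hu0 hT0 hA
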